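/- Let φ : N₁ ⥤ N₂ be an admissible epi-functor between nested graphs, and let μ : N₁ ⥤ N₂' be the canonical merger obtained by identifying, within each fiber of φ, all objects that are vertices of that fiber. Then the irreducible flags of N₂' are precisely the images under μ of the irreducible flags of N₁. -/

import Mathlib

open CategoryTheory

universe v u

/-- A morphism in a category is an identity morphism (up to `eqToHom`). -/
def IsId {C : Type u} [Category.{v} C] {A B : C} (f : A ⟶ B) : Prop :=
  ∃ h : A = B, f = eqToHom h

/-- A flag in a nested graph is a non-identity morphism. -/
def IsFlag {C : Type u} [Category.{v} C] {A B : C} (f : A ⟶ B) : Prop :=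
  ¬ IsId f

/-- An irreducible flag is a flag that cannot be written as the composite of two flags. -/
def IsIrred {C : Type u} [Category.{v} C] {A B : C} (f : A ⟶ B) : Prop :=
  IsFlag f ∧ ¬ ∃ (X : C) (g : A ⟶ X) (h : X ⟶ B), IsFlag g ∧ IsFlag h ∧ g ≫ h = f

/-- A grading: a functor to the finite ordinal `Fin n` (viewed as a preorder category)
sending every non-identity morphism to a non-identity morphism. -/
def IsGrading {C : Type u} [Category.{v} C] {n : ℕ} (G : C ⥤ Fin n) : Prop :=
  ∀ ⦃A B : C⦄ (f : A ⟶ B), IsFlag f → IsFlag (G.map f)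

/-- A nested graph: a category admitting a grading into some finite ordinal. -/
def IsNestedGraph (C : Type u) [Category.{v} C] : Prop :=
  ∃ (n : ℕ) (G : C ⥤ Fin n), IsGrading G

/-- A functor `φ` contracts a flag `f` if `φ.map f` is an identity. -/
def Contracts {C D : Type u} [Category.{v} C] [Category.{v} D]
    (φ : C ⥤ D) {A B : C} (f : A ⟶ B) : Prop :=
  IsId (φ.map f)

/-- An admissible functor: it maps irreducible flags to identities or irreducible flags,
and whenever it contracts an irreducible flag with domain `A`, it contracts every
irreducible flag with domain `A`. -/
def IsAdmissible {C D : Type u} [Category.{v} C] [Category.{v} D] (φ : C ⥤ D) : Prop :=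
  (∀ ⦃A B : C⦄ (f : A ⟶ B), IsIrred f → IsId (φ.map f) ∨ IsIrred (φ.map f)) ∧
  (∀ ⦃A B B' : C⦄ (f : A ⟶ B) (g : A ⟶ B'), IsIrred f → IsIrred g →
      Contracts φ f → Contracts φ g)

/-- The morphisms of the codomain generated by the image of a functor. -/
inductive GenBy {C D : Type u} [Category.{v} C] [Category.{v} D] (φ : C ⥤ D) :
    ∀ {X Y : D}, (X ⟶ Y) → Prop
  | id (X : D) : GenBy φ (𝟙 X)
  | map {A B : C} (f : A ⟶ B) : GenBy φ (φ.map f)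
  | comp {X Y Z : D} (f : X ⟶ Y) (g : Y ⟶ Z) :
      GenBy φ f → GenBy φ g → GenBy φ (f ≫ g)

/-- An epi-functor: its image generates the codomain. -/
def IsEpiFunctor {C D : Type u} [Category.{v} C] [Category.{v} D] (φ : C ⥤ D) : Prop :=
  Function.Surjective φ.obj ∧ ∀ ⦃X Y : D⦄ (f : X ⟶ Y), GenBy φ f

/-- `μ : C ⥤ D` exhibits `D` as the quotient of `C` identifying `r`-related objects,
with morphisms freely generated by the morphisms of `C` subject to the composition
relations of `C` (expressed via the universal property). -/
def IsQuotientBy {C D : Type u} [Category.{v} C] [Category.{v} D]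
    (r : C → C → Prop) (μ : C ⥤ D) : Prop :=
  (∀ A B : C, μ.obj A = μ.obj B ↔ Relation.EqvGen r A B) ∧
  Function.Surjective μ.obj ∧
  (∀ ⦃X Y : D⦄ (f : X ⟶ Y), GenBy μ f) ∧
  (∀ (E : Type u) [Category.{v} E] (F : C ⥤ E),
      (∀ A B : C, r A B → F.obj A = F.obj B) → ∃! F' : D ⥤ E, μ ⋙ F' = F)

/-- A merger: an admissible epi-functor exhibiting its codomain as the quotient of its
domain by an equivalence relation on objects, with morphisms freely generated subject to
the composition relations of the domain. -/
def IsMerger {C D : Type u} [Category.{v} C] [Category.{v} D] (μ : C ⥤ D) : Prop :=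
  IsAdmissible μ ∧ IsEpiFunctor μ ∧
    ∃ r : C → C → Prop, Equivalence r ∧ IsQuotientBy r μ

/-- `A` is a vertex of its fiber under `φ`: it is not the domain of any flag
contracted by `φ`. -/
def IsVertexOver {C D : Type u} [Category.{v} C] [Category.{v} D]
    (φ : C ⥤ D) (A : C) : Prop :=
  ∀ ⦃B : C⦄ (f : A ⟶ B), Contracts φ f → IsId f

/-- `A₁` is a vertex of the fiber of `φ` over `A₂`. -/
def IsFiberVertex {C D : Type u} [Category.{v} C] [Category.{v} D]
    (φ : C ⥤ D) (A₂ : D) (A₁ : C) : Prop :=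
  φ.obj A₁ = A₂ ∧ IsVertexOver φ A₁

/-- A contraction: an admissible epi-functor each of whose fibers is a corolla,
i.e. has a unique vertex. -/
def IsContraction {C D : Type u} [Category.{v} C] [Category.{v} D] (κ : C ⥤ D) : Prop :=
  IsAdmissible κ ∧ IsEpiFunctor κ ∧ ∀ A₂ : D, ∃! A₁ : C, IsFiberVertex κ A₂ A₁

/-- The canonical merger relation of `φ`: it relates distinct objects `A ≠ B` exactly when
`φ A = φ B` and both `A` and `B` are vertices of the fiber of `φ` over `φ A`. -/
def mergerRel {C D : Type u} [Category.{v} C] [Category.{v} D] (φ : C ⥤ D) :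
    C → C → Prop :=
  fun A B => A ≠ B ∧ φ.obj A = φ.obj B ∧ IsVertexOver φ A ∧ IsVertexOver φ B

/-- A canonical merger–contraction decomposition of `φ`: the merger part is the quotient
of the domain identifying, within each fiber of `φ`, all objects that are vertices of that
fiber. -/
def IsCanonicalDecomp {C P D : Type u} [Category.{v} C] [Category.{v} P] [Category.{v} D]
    (φ : C ⥤ D) (μ : C ⥤ P) (κ : P ⥤ D) : Prop :=
  IsQuotientBy (mergerRel φ) μ ∧ μ ⋙ κ = φ

/-- Two merger–contraction pairs are equal as morphisms of nested graphs: one is obtained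
from the other by shifting an isomorphism from the merger to the contraction. -/
def PairEquiv {A B P P' : Type u} [Category.{v} A] [Category.{v} B]
    [Category.{v} P] [Category.{v} P']
    (μ : A ⥤ P) (κ : P ⥤ B) (μ' : A ⥤ P') (κ' : P' ⥤ B) : Prop :=
  ∃ (e : P ⥤ P') (e' : P' ⥤ P), e ⋙ e' = 𝟭 P ∧ e' ⋙ e = 𝟭 P' ∧
    μ ⋙ e = μ' ∧ e ⋙ κ' = κ

/-- A category contains no cycle of flags. -/
def NoFlagCycles (C : Type u) [Category.{v} C] : Prop :=
  ∀ (k : ℕ), 0 < k → ∀ (obj : Fin (k + 1) → C)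
    (flag : ∀ i : Fin k, obj i.castSucc ⟶ obj i.succ),
    (∀ i, IsFlag (flag i)) → obj 0 ≠ obj (Fin.last k)

/- Every morphism of the quotient is a composite of images of irreducible flags, so an irreducible
flag of the quotient is one of these images. Conversely, where flags compose to flags, recording
whether a morphism is an identity, an irreducible flag or a reducible flag is a functor to a
three-element monoid. A monoid has a single object, so this functor respects every identification
of objects and extends to the quotient. The extension preserves flags, hence detects the
irreducibility of the image of an irreducible flag. -/

/-- The flags of a category, as a property of morphisms. -/
def flags (C : Type*) [Category* C] : MorphismProperty C := fun _ _ f => IsFlag f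

/-- The irreducible flags of a category, as a property of morphisms. -/
def irreducibleFlags (C : Type*) [Category* C] : MorphismProperty C := fun _ _ f => IsIrred f

/-- A functor preserves flags if it sends flags to flags; a grading is the case where the
codomain is a finite ordinal. -/
def PreservesFlags {C D : Type*} [Category* C] [Category* D] (F : C ⥤ D) : Prop :=
  ∀ ⦃A B : C⦄ (f : A ⟶ B), IsFlag f → IsFlag (F.map f)

section Flags

variable {C D : Type*} [Category* C] [Category* D]

theorem isId_id (A : C) : IsId (𝟙 A) :=
  ⟨rfl, rfl⟩

theorem isId_iff_eq_id {A : C} {f : A ⟶ A} : IsId f ↔ f = 𝟙 A :=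
  ⟨fun ⟨_, hf⟩ => hf, fun hf => ⟨rfl, hf⟩⟩

theorem IsId.map (F : C ⥤ D) {A B : C} {f : A ⟶ B} (hf : IsId f) : IsId (F.map f) := by
  obtain ⟨rfl, rfl⟩ := hf
  exact ⟨rfl, F.map_id A⟩

theorem IsFlag.of_map (F : C ⥤ D) {A B : C} {f : A ⟶ B} (hf : IsFlag (F.map f)) : IsFlag f :=
  fun hId => hf (hId.map F)

theorem PreservesFlags.isStableUnderComposition [(flags D).IsStableUnderComposition]
    {F : C ⥤ D} (hF : PreservesFlags F) : (flags C).IsStableUnderComposition where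
  comp_mem f g hf hg := by
    have hcomp : IsFlag (F.map f ≫ F.map g) := (flags D).comp_mem _ _ (hF f hf) (hF g hg)
    exact IsFlag.of_map F (F.map_comp f g ▸ hcomp)

theorem IsIrred.of_map {F : C ⥤ D} (hF : PreservesFlags F) {A B : C} {f : A ⟶ B}
    (hf : IsIrred (F.map f)) : IsIrred f := by
  refine ⟨hf.1.of_map F, ?_⟩
  rintro ⟨X, g, h, hg, hh, rfl⟩
  exact hf.2 ⟨F.obj X, F.map g, F.map h, hF g hg, hF h hh, (F.map_comp g h).symm⟩

theorem IsIrred.of_multiplicativeClosure {W : MorphismProperty C} {A B : C} {f : A ⟶ B}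
    (hf : IsIrred f) (hW : W.multiplicativeClosure f) : W f := by
  induction hW with
  | of f hfW => exact hfW
  | id A => exact absurd (isId_id A) hf.1
  | comp_of g h _ hhW ih =>
    by_cases hgId : IsId g
    · obtain ⟨rfl, rfl⟩ := hgId
      simpa only [eqToHom_refl, Category.id_comp] using hhW
    by_cases hhId : IsId h
    · obtain ⟨rfl, rfl⟩ := hhId
      simp only [eqToHom_refl, Category.comp_id] at hf ⊢
      exact ih hf
    exact absurd ⟨_, g, h, hgId, hhId, rfl⟩ hf.2

end Flags

section Graded

variable {P : Type*} [PartialOrder P]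

theorem isFlag_iff_lt {a b : P} (f : a ⟶ b) : IsFlag f ↔ a < b := by
  have hId : IsId f ↔ a = b := ⟨fun ⟨hab, _⟩ => hab, fun hab => ⟨hab, Subsingleton.elim _ _⟩⟩
  rw [IsFlag, hId, (leOfHom f).lt_iff_ne]

instance flags_isStableUnderComposition_of_partialOrder :
    (flags P).IsStableUnderComposition where
  comp_mem f g hf hg :=
    (isFlag_iff_lt _).2 (((isFlag_iff_lt f).1 hf).trans ((isFlag_iff_lt g).1 hg))

variable {C : Type*} [Category* C]

theorem PreservesFlags.obj_lt {G : C ⥤ P} (hG : PreservesFlags G) {A B : C} {f : A ⟶ B}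
    (hf : IsFlag f) : G.obj A < G.obj B :=
  (isFlag_iff_lt _).1 (hG f hf)

theorem PreservesFlags.multiplicativeClosure_irreducibleFlags [LocallyFiniteOrder P]
    {G : C ⥤ P} (hG : PreservesFlags G) {A B : C} (f : A ⟶ B) :
    (irreducibleFlags C).multiplicativeClosure f := by
  induction hI : Finset.Icc (G.obj A) (G.obj B) using Finset.strongInduction
    generalizing A B with
  | H I ih =>
    subst hI
    by_cases hId : IsId f
    · obtain ⟨rfl, rfl⟩ := hId
      exact .id A
    by_cases hirr : IsIrred f
    · exact .of f hirr
    obtain ⟨X, g, h, hg, hh, rfl⟩ := not_not.1 fun hfactor => hirr ⟨hId, hfactor⟩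
    have hAX : G.obj A < G.obj X := hG.obj_lt hg
    have hXB : G.obj X < G.obj B := hG.obj_lt hh
    have hAB : G.obj A ≤ G.obj B := (hAX.trans hXB).le
    exact MorphismProperty.comp_mem _ g h
      (ih _ (Finset.Icc_ssubset_Icc_right hAB le_rfl hXB) g rfl)
      (ih _ (Finset.Icc_ssubset_Icc_left hAB hAX le_rfl) h rfl)

theorem IsNestedGraph.isStableUnderComposition_flags (hC : IsNestedGraph C) :
    (flags C).IsStableUnderComposition :=
  let ⟨_, _, hG⟩ := hC
  PreservesFlags.isStableUnderComposition hG

theorem IsNestedGraph.multiplicativeClosure_irreducibleFlags (hC : IsNestedGraph C) :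
    (irreducibleFlags C).multiplicativeClosure = ⊤ :=
  let ⟨_, _, hG⟩ := hC
  top_unique fun _ _ f _ => PreservesFlags.multiplicativeClosure_irreducibleFlags hG f

end Graded

/-- The three kinds of morphisms: identities, irreducible flags and reducible flags. They form a
monoid whose product is the kind of a composite when flags compose to flags. -/
inductive FlagKind : Type
  | identity
  | irreducible
  | reducible

namespace FlagKind

/-- The product of kinds: `identity` is neutral and all other products are `reducible`. -/
def mul : FlagKind → FlagKind → FlagKind
  | identity, b => b
  | a, identity => a
  | _, _ => reducible

instance : Monoid FlagKind where
  one := identity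
  mul := mul
  one_mul a := by cases a <;> rfl
  mul_one a := by cases a <;> rfl
  mul_assoc a b c := by cases a <;> cases b <;> cases c <;> rfl

theorem eq_one_of_mul_eq_one {a b : FlagKind} (h : a * b = 1) : a = 1 ∧ b = 1 := by
  cases a <;> cases b <;> first | exact ⟨rfl, rfl⟩ | cases h

theorem eq_one_or_eq_one_of_mul_eq_irreducible {a b : FlagKind} (h : a * b = irreducible) :
    a = 1 ∨ b = 1 := by
  cases a <;> cases b <;> first | exact Or.inl rfl | exact Or.inr rfl | cases h

theorem isFlag_iff_ne_one {x y : SingleObj FlagKind} (a : x ⟶ y) :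
    IsFlag a ↔ a ≠ (1 : FlagKind) :=
  not_congr isId_iff_eq_id

instance : (flags (SingleObj FlagKind)).IsStableUnderComposition where
  comp_mem a _ ha _ := (isFlag_iff_ne_one _).2 fun hab =>
    (isFlag_iff_ne_one a).1 ha (eq_one_of_mul_eq_one hab).2

theorem isIrred_of_eq_irreducible {x y : SingleObj FlagKind} {a : x ⟶ y}
    (ha : a = irreducible) : IsIrred a := by
  have hne : irreducible ≠ 1 := FlagKind.noConfusion
  refine ⟨(isFlag_iff_ne_one a).2 (ha ▸ hne), ?_⟩
  rintro ⟨z, b, c, hb, hc, hbc⟩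
  rw [isFlag_iff_ne_one] at hb hc
  exact (eq_one_or_eq_one_of_mul_eq_irreducible (hbc.trans ha)).elim hc hb

variable {C : Type*} [Category* C]

open Classical in
/-- The kind of a morphism. -/
noncomputable def ofHom {A B : C} (f : A ⟶ B) : FlagKind :=
  if IsId f then identity else if IsIrred f then irreducible else reducible

theorem ofHom_eq_one_iff {A B : C} (f : A ⟶ B) : ofHom f = 1 ↔ IsId f := by
  change ofHom f = identity ↔ IsId f
  unfold ofHom
  split_ifs <;> simp_all only

theorem ofHom_of_isIrred {A B : C} {f : A ⟶ B} (hf : IsIrred f) : ofHom f = irreducible := by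
  rw [ofHom, if_neg hf.1, if_pos hf]

theorem ofHom_comp [(flags C).IsStableUnderComposition] {X Y Z : C} (f : X ⟶ Y) (g : Y ⟶ Z) :
    ofHom (f ≫ g) = ofHom g * ofHom f := by
  by_cases hf : IsId f
  · rw [(ofHom_eq_one_iff f).2 hf, mul_one]
    obtain ⟨rfl, rfl⟩ := hf
    rw [eqToHom_refl, Category.id_comp]
  by_cases hg : IsId g
  · rw [(ofHom_eq_one_iff g).2 hg, one_mul]
    obtain ⟨rfl, rfl⟩ := hg
    rw [eqToHom_refl, Category.comp_id]
  have hflag : ¬ IsId (f ≫ g) := (flags C).comp_mem f g hf hg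
  have hred : ¬ IsIrred (f ≫ g) := fun h => h.2 ⟨_, f, g, hf, hg, rfl⟩
  unfold ofHom
  rw [if_neg hf, if_neg hg, if_neg hflag, if_neg hred]
  split_ifs <;> rfl

variable (C) in
/-- The functor recording the kind of each morphism of a category in which flags compose to
flags. -/
noncomputable def functor [(flags C).IsStableUnderComposition] : C ⥤ SingleObj FlagKind where
  obj _ := SingleObj.star FlagKind
  map f := ofHom f
  map_id A := (ofHom_eq_one_iff _).2 (isId_id A)
  map_comp f g := ofHom_comp f g

theorem preservesFlags_functor [(flags C).IsStableUnderComposition] :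
    PreservesFlags (functor C) :=
  fun _ _ f hf => (isFlag_iff_ne_one _).2 fun h => hf ((ofHom_eq_one_iff f).1 h)

theorem isIrred_functor_map [(flags C).IsStableUnderComposition] {A B : C} {f : A ⟶ B}
    (hf : IsIrred f) : IsIrred ((functor C).map f) :=
  isIrred_of_eq_irreducible (ofHom_of_isIrred hf)

end FlagKind

section Quotient

variable {C D : Type u} [Category.{v} C] [Category.{v} D] {r : C → C → Prop} {μ : C ⥤ D}

theorem GenBy.multiplicativeClosure_strictMap {W : MorphismProperty C}
    (hW : W.multiplicativeClosure = ⊤) {X Y : D} {g : X ⟶ Y} (hg : GenBy μ g) :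
    (W.strictMap μ).multiplicativeClosure g := by
  induction hg with
  | id X => exact .id X
  | map f => exact W.strictMap_multiplicativeClosure_le μ _ (.map (MorphismProperty.of_eq_top hW f))
  | comp f g _ _ hf hg => exact MorphismProperty.comp_mem _ f g hf hg

theorem PreservesFlags.of_comp {E : Type*} [Category* E] [(flags E).IsStableUnderComposition]
    (hμ : ∀ ⦃X Y : D⦄ (g : X ⟶ Y), GenBy μ g) {H : D ⥤ E} (hH : PreservesFlags (μ ⋙ H)) :
    PreservesFlags H := by
  intro X Y g hg
  induction hμ g with
  | id X => exact absurd (isId_id X) hg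
  | map f => exact hH f (hg.of_map μ)
  | comp f g _ _ ihf ihg =>
    by_cases hfId : IsId f
    · obtain ⟨rfl, rfl⟩ := hfId
      simp only [eqToHom_refl, Category.id_comp] at hg ⊢
      exact ihg hg
    by_cases hgId : IsId g
    · obtain ⟨rfl, rfl⟩ := hgId
      simp only [eqToHom_refl, Category.comp_id] at hg ⊢
      exact ihf hg
    rw [H.map_comp]
    exact (flags E).comp_mem _ _ (ihf hfId) (ihg hgId)

theorem IsQuotientBy.exists_comp_eq (hμ : IsQuotientBy r μ) {E : Type} [SmallCategory E]
    (F : C ⥤ E) (hF : ∀ A B, r A B → F.obj A = F.obj B) : ∃ H : D ⥤ E, μ ⋙ H = F := by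
  -- The universal property only speaks of targets in the universes of `C`, so `E` is lifted.
  let lift {C' : Type u} [Category.{v} C'] :
      (C' ⥤ E) ≃ (C' ⥤ ULiftHom.{v} (ULift.{u} E)) :=
    ULiftHomULiftCategory.equivCongrLeft
  obtain ⟨F', hF', -⟩ := hμ.2.2.2 (ULiftHom.{v} (ULift.{u} E)) (lift F)
    fun A B hAB => congrArg (fun X => ULiftHom.objUp (ULift.up X)) (hF A B hAB)
  exact ⟨lift.symm F', congrArg lift.symm hF'⟩

theorem IsQuotientBy.isIrred_map [(flags C).IsStableUnderComposition] (hμ : IsQuotientBy r μ)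
    {A B : C} {f : A ⟶ B} (hf : IsIrred f) : IsIrred (μ.map f) := by
  obtain ⟨H, hH⟩ := hμ.exists_comp_eq (FlagKind.functor C) fun _ _ _ => rfl
  have hpres : PreservesFlags (μ ⋙ H) := hH ▸ FlagKind.preservesFlags_functor
  have hirr : IsIrred ((μ ⋙ H).map f) := hH ▸ FlagKind.isIrred_functor_map hf
  exact IsIrred.of_map (.of_comp hμ.2.2.1 hpres) hirr

theorem canonical_merger_irreducible_flags_general [(flags C).IsStableUnderComposition]
    (hC : (irreducibleFlags C).multiplicativeClosure = ⊤) (hμ : IsQuotientBy r μ) :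
    ∀ ⦃X Y : D⦄ (g : X ⟶ Y), IsIrred g ↔
      ∃ (A B : C) (f : A ⟶ B), IsIrred f ∧
        ∃ (hX : μ.obj A = X) (hY : μ.obj B = Y),
          g = eqToHom hX.symm ≫ μ.map f ≫ eqToHom hY := by
  refine fun X Y g => ⟨fun hg => ?_, ?_⟩
  · have hgen := (hμ.2.2.1 g).multiplicativeClosure_strictMap hC
    obtain ⟨hf⟩ := hg.of_multiplicativeClosure hgen
    exact ⟨_, _, _, hf, rfl, rfl, by simp⟩
  · rintro ⟨A, B, f, hf, rfl, rfl, rfl⟩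
    simpa using hμ.isIrred_map hf

end Quotient

/-- if `φ : N₁ ⥤ N₂` is an admissible epi-functor between nested graphs and
`μ : N₁ ⥤ N₂'` is the canonical merger of `φ` (the quotient identifying, within each
fiber of `φ`, all objects that are vertices of that fiber), then the irreducible flags of
`N₂'` are precisely the images under `μ` of the irreducible flags of `N₁`. -/
theorem canonical_merger_irreducible_flags {N₁ N₂ N₂' : Type u}
    [Category.{v} N₁] [Category.{v} N₂] [Category.{v} N₂']
    (h₁ : IsNestedGraph N₁) (h₂ : IsNestedGraph N₂)
    (φ : N₁ ⥤ N₂) (hadm : IsAdmissible φ) (hepi : IsEpiFunctor φ)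
    (μ : N₁ ⥤ N₂') (hμ : IsQuotientBy (mergerRel φ) μ) :
    ∀ ⦃X Y : N₂'⦄ (g : X ⟶ Y), IsIrred g ↔
      ∃ (A B : N₁) (f : A ⟶ B), IsIrred f ∧
        ∃ (hX : μ.obj A = X) (hY : μ.obj B = Y),
          g = eqToHom hX.symm ≫ μ.map f ≫ eqToHom hY := by
  have := h₁.isStableUnderComposition_flags
  exact canonical_merger_irreducible_flags_general h₁.multiplicativeClosure_irreducibleFlags hμ
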